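/- Let 𝒢_imp = (𝒢, ∼) be an imperfect-information arena with secret set S ⊆ V₁ marked by the atomic proposition p_S (p_S ∈ val(v) iff v ∈ S). For every infinite play π: Plays_ω, π, 0 ⊨ G ¬ R p_S (with respect to the relation ≈) if and only if π is winning for Alice, i.e., no finite prefix ρ = π[0,i] with π[i] ∈ V₁ satisfies I(ρ) ⊆ S. -/

import Mathlib

/-!
Since every finite play is a prefix of an infinite one, quantifying over positions of infinite plays
whose prefix is related to `ρ` is the same as quantifying over the last positions of finite plays
related to `ρ`. Hence `R p_S` holds after `ρ` exactly when the information set of `ρ` lies in the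
secret. `G ¬ R p_S` asks this to fail at every position, not only at those of Player 1; but the
relation is reflexive, so the information set contains the last position of `ρ`, and it can lie in
`S ⊆ V₁` only if that position belongs to Player 1.
-/

namespace UniformStrategies

variable {V AP : Type}

/-- A two-player turn-based arena. -/
structure Arena (V : Type) (AP : Type) where
  V1 : Set V
  V2 : Set V
  union_eq : V1 ∪ V2 = Set.univ
  inter_empty : V1 ∩ V2 = ∅
  E : V → V → Prop
  edges_ok : ∀ v w, E v w → (v ∈ V1 ∧ w ∈ V2) ∨ (v ∈ V2 ∧ w ∈ V1)
  v0 : V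
  val : V → Set AP
  val_finite : ∀ v, (val v).Finite

namespace Arena

/-- A finite play: a nonempty finite path starting at `v0`. -/
def IsFinPlay (G : Arena V AP) (ρ : List V) : Prop :=
  ρ ≠ [] ∧ ρ.head? = some G.v0 ∧ ρ.Chain' G.E

/-- An infinite play: an infinite path starting at `v0`. -/
def IsInfPlay (G : Arena V AP) (π : ℕ → V) : Prop :=
  π 0 = G.v0 ∧ ∀ i, G.E (π i) (π (i + 1))

/-- The set of all infinite plays `Plays_ω`. -/
def PlaysInf (G : Arena V AP) : Set (ℕ → V) := {π | G.IsInfPlay π}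

end Arena

/-- The prefix `π[0,i]` of an infinite play. -/
def pref (π : ℕ → V) (i : ℕ) : List V := (List.range (i + 1)).map π

/-- RLTL formulas: `φ ::= p | ¬φ | φ∧ψ | ○φ | φ U ψ | R φ`. -/
inductive RLTL (AP : Type) : Type
  | atom : AP → RLTL AP
  | neg : RLTL AP → RLTL AP
  | and : RLTL AP → RLTL AP → RLTL AP
  | next : RLTL AP → RLTL AP
  | untl : RLTL AP → RLTL AP → RLTL AP
  | R : RLTL AP → RLTL AP

namespace RLTL

def or (φ ψ : RLTL AP) : RLTL AP := .neg (.and (.neg φ) (.neg ψ))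

def imp (φ ψ : RLTL AP) : RLTL AP := RLTL.or (.neg φ) ψ

/-- A tautology (built from the atom `p`). -/
def top (p : AP) : RLTL AP := RLTL.or (.atom p) (.neg (.atom p))

def bot (p : AP) : RLTL AP := .neg (RLTL.top p)

/-- The derived `always` operator `G φ := ¬(⊤ U ¬φ)`. -/
def always (p : AP) (φ : RLTL AP) : RLTL AP := .neg (.untl (RLTL.top p) (.neg φ))

/-- Finite disjunction. -/
def bigOr (p : AP) (l : List (RLTL AP)) : RLTL AP := l.foldr RLTL.or (RLTL.bot p)

/-- A formula has no occurrence of the modality `R` (R-depth 0, pure LTL). -/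
def RFree : RLTL AP → Prop
  | .atom _ => True
  | .neg φ => RFree φ
  | .and φ ψ => RFree φ ∧ RFree ψ
  | .next φ => RFree φ
  | .untl φ ψ => RFree φ ∧ RFree ψ
  | .R _ => False

end RLTL

/-- Satisfaction `U, π, i ⊨ φ` of an RLTL formula over the arena `G`, with
binary relation `rel` between finite plays, in the universe `U`. -/
def sat (G : Arena V AP) (rel : List V → List V → Prop) (U : Set (ℕ → V)) :
    RLTL AP → (ℕ → V) → ℕ → Prop
  | .atom p, π, i => p ∈ G.val (π i)
  | .neg φ, π, i => ¬ sat G rel U φ π i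
  | .and φ ψ, π, i => sat G rel U φ π i ∧ sat G rel U ψ π i
  | .next φ, π, i => sat G rel U φ π (i + 1)
  | .untl φ ψ, π, i =>
      ∃ j, i ≤ j ∧ sat G rel U ψ π j ∧ ∀ k, i ≤ k → k < j → sat G rel U φ π k
  | .R φ, π, i => ∀ π' ∈ U, ∀ j : ℕ, rel (pref π i) (pref π' j) → sat G rel U φ π' j

/-- A strategy for Player 1: a partial function from finite plays ending in `V1`
to next positions along an edge. -/
structure Strategy1 (G : Arena V AP) where
  act : List V → Option V
  act_ok : ∀ ρ v, act ρ = some v →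
    G.IsFinPlay ρ ∧ ∃ w, ρ.getLast? = some w ∧ w ∈ G.V1 ∧ G.E w v

/-- The outcome of a strategy: the set of infinite plays induced by it. -/
def Strategy1.out {G : Arena V AP} (σ : Strategy1 G) : Set (ℕ → V) :=
  {π | G.IsInfPlay π ∧ ∀ i, π i ∈ G.V1 → σ.act (pref π i) = some (π (i + 1))}

/-- `(rel,φ)`-strictly-uniform strategy. -/
def StrictlyUniform {G : Arena V AP} (rel : List V → List V → Prop)
    (φ : RLTL AP) (σ : Strategy1 G) : Prop :=
  ∀ π ∈ σ.out, sat G rel σ.out φ π 0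

/-- `(rel,φ)`-fully-uniform strategy. -/
def FullyUniform {G : Arena V AP} (rel : List V → List V → Prop)
    (φ : RLTL AP) (σ : Strategy1 G) : Prop :=
  ∀ π ∈ σ.out, sat G rel G.PlaysInf φ π 0

/-- Positions of an imperfect-information arena: Player 1 positions `v` and
Player 2 positions `(v, a)` for an action `a`. -/
abbrev GPos (Q Act : Type) := Q ⊕ Q × Act

/-- An imperfect-information arena `(𝒢, ∼)`: Player 1 positions are of the form
`v`, Player 2 positions of the form `(v,a)`, `v E (v',a)` implies `v = v'`,
`v₀ ∈ V₁`, and `∼` is an equivalence relation on Player 1 positions. -/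
structure ImpArena (Q Act AP : Type) where
  G : Arena (GPos Q Act) AP
  V1_def : G.V1 = Set.range Sum.inl
  V2_def : G.V2 = Set.range Sum.inr
  v0_P1 : ∃ q : Q, G.v0 = Sum.inl q
  edge_act : ∀ (v v' : Q) (a : Act), G.E (Sum.inl v) (Sum.inr (v', a)) → v = v'
  sim : Q → Q → Prop
  sim_equiv : Equivalence sim

variable {Q Act : Type}

/-- Componentwise relation on positions: Player 1 positions are related iff they
are `∼`-equivalent; Player 2 positions are related iff they carry the same action. -/
def posSim (M : ImpArena Q Act AP) : GPos Q Act → GPos Q Act → Prop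
  | Sum.inl v, Sum.inl v' => M.sim v v'
  | Sum.inr (_, a), Sum.inr (_, a') => a = a'
  | _, _ => False

/-- The extension `≈` of `∼` to finite plays: plays of the same length, related
componentwise. -/
def playEquiv (M : ImpArena Q Act AP) (ρ ρ' : List (GPos Q Act)) : Prop :=
  List.Forall₂ (posSim M) ρ ρ'

/-- Bob's information set after a finite play `ρ`: the set of last positions of
finite plays `≈`-equivalent to `ρ`. -/
def infoSet {Q Act : Type} (M : ImpArena Q Act AP) (ρ : List (GPos Q Act)) :
    Set (GPos Q Act) :=
  {v | ∃ ρ', M.G.IsFinPlay ρ' ∧ playEquiv M ρ ρ' ∧ ρ'.getLast? = some v}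

@[simp]
theorem getLast?_pref (π : ℕ → V) (i : ℕ) : (pref π i).getLast? = some (π i) := by
  simp [pref, List.range_succ]

namespace Arena

variable {G : Arena V AP} {rel : List V → List V → Prop} {π : ℕ → V}

theorem IsInfPlay.isFinPlay_pref (hπ : G.IsInfPlay π) (i : ℕ) : G.IsFinPlay (pref π i) := by
  refine ⟨by simp [pref], by simp [pref, List.range_succ_eq_map, hπ.1], ?_⟩
  refine List.isChain_iff_getElem.2 fun j _ => ?_
  simpa [pref] using hπ.2 j

/-- The assumption that every finite play extends to an infinite one. The index `ρ.length - 1` is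
that of the last position of `ρ`; no truncation occurs, as finite plays are nonempty. -/
def FinPlaysExtend (G : Arena V AP) : Prop :=
  ∀ ρ, G.IsFinPlay ρ → ∃ π, G.IsInfPlay π ∧ pref π (ρ.length - 1) = ρ

/-- The information set of an observer who cannot tell a finite play from those `rel` relates it
to. It generalizes `infoSet`, which is definitionally the case `rel = playEquiv M`. -/
def possibleLasts (G : Arena V AP) (rel : List V → List V → Prop) (ρ : List V) : Set V :=
  {v | ∃ ρ', G.IsFinPlay ρ' ∧ rel ρ ρ' ∧ ρ'.getLast? = some v}

theorem FinPlaysExtend.mem_possibleLasts_iff (hG : G.FinPlaysExtend) {ρ : List V} {v : V} :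
    v ∈ G.possibleLasts rel ρ ↔ ∃ π ∈ G.PlaysInf, ∃ j, rel ρ (pref π j) ∧ π j = v := by
  constructor
  · rintro ⟨ρ', hρ', hrel, hlast⟩
    obtain ⟨π, hπ, hpref⟩ := hG ρ' hρ'
    rw [← hpref] at hrel hlast
    exact ⟨π, hπ, _, hrel, by simpa using hlast⟩
  · rintro ⟨π, hπ, j, hrel, rfl⟩
    exact ⟨pref π j, hπ.isFinPlay_pref j, hrel, getLast?_pref π j⟩

theorem IsInfPlay.mem_possibleLasts_pref (hπ : G.IsInfPlay π) {i : ℕ}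
    (hrel : rel (pref π i) (pref π i)) : π i ∈ G.possibleLasts rel (pref π i) :=
  ⟨pref π i, hπ.isFinPlay_pref i, hrel, getLast?_pref π i⟩

end Arena

section Satisfaction

variable {G : Arena V AP} {rel : List V → List V → Prop} {U : Set (ℕ → V)} {π : ℕ → V} {i : ℕ}
  {p : AP}

theorem sat_neg_iff {φ : RLTL AP} : sat G rel U (.neg φ) π i ↔ ¬ sat G rel U φ π i := Iff.rfl

theorem sat_top : sat G rel U (.top p) π i := by
  simp [RLTL.top, RLTL.or, sat]

theorem sat_always_iff {φ : RLTL AP} :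
    sat G rel U (.always p φ) π i ↔ ∀ j, i ≤ j → sat G rel U φ π j := by
  simp [RLTL.always, sat, sat_top]

theorem sat_R_atom_iff (hG : G.FinPlaysExtend) :
    sat G rel G.PlaysInf (.R (.atom p)) π i ↔
      G.possibleLasts rel (pref π i) ⊆ {v | p ∈ G.val v} := by
  constructor
  · intro h v hv
    obtain ⟨π', hπ', j, hrel, rfl⟩ := hG.mem_possibleLasts_iff.1 hv
    exact h π' hπ' j hrel
  · exact fun h π' hπ' j hrel => h (hG.mem_possibleLasts_iff.2 ⟨π', hπ', j, hrel, rfl⟩)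

end Satisfaction

theorem sat_G_not_R_secret_iff_winning_for_Alice_general
    {G : Arena V AP} {rel : List V → List V → Prop} {S : Set V} {p : AP} {π : ℕ → V}
    (hrefl : ∀ ρ, rel ρ ρ) (hval : ∀ v, p ∈ G.val v ↔ v ∈ S) (hS : S ⊆ G.V1)
    (hG : G.FinPlaysExtend) (hπ : G.IsInfPlay π) :
    sat G rel G.PlaysInf (.always p (.neg (.R (.atom p)))) π 0 ↔
      ∀ i, π i ∈ G.V1 → ¬ G.possibleLasts rel (pref π i) ⊆ S := by
  obtain rfl : {v | p ∈ G.val v} = S := Set.ext hval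
  have mem_V1_of_subset (i : ℕ) (hi : G.possibleLasts rel (pref π i) ⊆ {v | p ∈ G.val v}) :
      π i ∈ G.V1 :=
    hS (hi (hπ.mem_possibleLasts_pref (hrefl _)))
  simp only [sat_always_iff, sat_neg_iff, sat_R_atom_iff hG, Nat.zero_le, forall_const]
  exact ⟨fun h i _ => h i, fun h i hi => h i (mem_V1_of_subset i hi) hi⟩

theorem posSim_refl (M : ImpArena Q Act AP) : ∀ v : GPos Q Act, posSim M v v
  | .inl v => M.sim_equiv.refl v
  | .inr _ => rfl

theorem playEquiv_refl (M : ImpArena Q Act AP) (ρ : List (GPos Q Act)) : playEquiv M ρ ρ :=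
  List.forall₂_same.2 fun v _ => posSim_refl M v

/-- In an imperfect-information arena with a secret set `S ⊆ V₁`
marked by `p_S`, for every infinite play `π`: `Plays_ω, π, 0 ⊨ G ¬ R p_S` (w.r.t. `≈`)
iff `π` is winning for Alice, i.e. no finite prefix `ρ = π[0,i]` with `π[i] ∈ V₁`
satisfies `I(ρ) ⊆ S`. -/
theorem sat_G_not_R_secret_iff_winning_for_Alice
    {Q Act AP : Type} [Fintype Act] (M : ImpArena Q Act AP)
    (S : Set Q) (pS : AP)
    (hval : ∀ v : GPos Q Act, pS ∈ M.G.val v ↔ v ∈ Sum.inl '' S)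
    (hext : ∀ ρ, M.G.IsFinPlay ρ →
      ∃ π, M.G.IsInfPlay π ∧ pref π (ρ.length - 1) = ρ)
    (π : ℕ → GPos Q Act) (hπ : M.G.IsInfPlay π) :
    sat M.G (playEquiv M) M.G.PlaysInf
        (RLTL.always pS (RLTL.neg (RLTL.R (.atom pS)))) π 0 ↔
      ∀ i : ℕ, π i ∈ M.G.V1 → ¬ infoSet M (pref π i) ⊆ Sum.inl '' S := by
  exact sat_G_not_R_secret_iff_winning_for_Alice_general (playEquiv_refl M) hval
    (M.V1_def ▸ Set.image_subset_range Sum.inl S) hext hπ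

end UniformStrategies
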